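/- Let T_9 = T_3 ⊗ T_3 be the 9×9 binary matrix obtained as the Kronecker square of T_3 = [[1,1,1],[1,0,1],[0,1,1]]. Then the minimum-distance spectrum of T_9 is S_{T_9} = (9, 6, 4, 4, 3, 2, 2, 2, 1); in particular S_{T_9}(4) = 4, attained by the row set {4, 5, 7, 8} (0-indexed rows). -/

import Mathlib

/-!
Over `𝔽₂` the span of the rows indexed by `R` consists of the subset sums `∑ i ∈ S, T i` with
`S ⊆ R` (`mem_span_rows_iff`), so every distance claim about the `9 × 9` matrix `T9` is a finite
check on subset sums.

* Lower bounds: for each `k` an optimal `k`-set of rows is exhibited. For `k ≤ 5` its nonzero subset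
  sums are checked to have weight at least the claimed value (`le_minDist`); for `k = 4` the set is
  `{4, 5, 7, 8}`, the rows that are products of the two weight-`2` rows of `T3`. For `k = 6, 7, 8`
  the set avoids row `0`, so all weights are even (`two_le_minDist`). For `k = 9` only nonzeroness
  is used.
* Upper bounds: for each claimed value `d` there is a short list of row sets whose sums have weight
  between `1` and `d`, such that every `k`-set of rows contains a member of the list
  (`spec_le`). For example, `d = 2` and `k = 6` use only five pairs; such pairs exist because
  `T3` has two rows whose sum has weight `1`, which tensored with a row of weight `2` gives a
  vector of weight `2`.
-/

open Matrix

/-- If `i < a * b` then `b` is positive. -/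
theorem kron_aux {a b i : ℕ} (h : i < a * b) : 0 < b := by
  rcases Nat.eq_zero_or_pos b with hb | hb
  · subst hb; simp at h
  · exact hb

/-- Kronecker product of binary matrices with flattened (0-indexed) indices:
row `q * b + j` of `kron A B` is formed from row `q` of `A` and row `j` of `B`. -/
def kron {a b c d : ℕ} (A : Matrix (Fin a) (Fin c) (ZMod 2))
    (B : Matrix (Fin b) (Fin d) (ZMod 2)) :
    Matrix (Fin (a * b)) (Fin (c * d)) (ZMod 2) :=
  Matrix.of fun i j =>
    A ⟨(i : ℕ) / b, Nat.div_lt_of_lt_mul (lt_of_lt_of_le i.isLt (Nat.mul_comm a b).le)⟩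
      ⟨(j : ℕ) / d, Nat.div_lt_of_lt_mul (lt_of_lt_of_le j.isLt (Nat.mul_comm c d).le)⟩ *
    B ⟨(i : ℕ) % b, Nat.mod_lt _ (kron_aux i.isLt)⟩
      ⟨(j : ℕ) % d, Nat.mod_lt _ (kron_aux j.isLt)⟩

/-- The ternary kernel `T₃`. -/
def T3 : Matrix (Fin 3) (Fin 3) (ZMod 2) := !![1, 1, 1; 1, 0, 1; 0, 1, 1]

/-- Minimum distance of the code generated by the rows of `T` indexed by `R`:
the least Hamming weight of a nonzero vector in the `𝔽₂`-span of those rows. -/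
noncomputable def minDist {p m : ℕ} (T : Matrix (Fin p) (Fin m) (ZMod 2))
    (R : Finset (Fin p)) : ℕ :=
  sInf {w : ℕ | ∃ x ∈ Submodule.span (ZMod 2) ((fun i => T i) '' (R : Set (Fin p))),
    x ≠ 0 ∧ hammingNorm x = w}

/-- Minimum-distance spectrum: `spec T k` is the largest minimum distance achievable
by a sub-code generated by `k` rows of `T`. -/
noncomputable def spec {p m : ℕ} (T : Matrix (Fin p) (Fin m) (ZMod 2)) (k : ℕ) : ℕ :=
  ((Finset.univ : Finset (Fin p)).powersetCard k).sup (minDist T)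

/-- `T₉ = T₃ ⊗ T₃`. -/
def T9 : Matrix (Fin 9) (Fin 9) (ZMod 2) := kron T3 T3

/-- The sum of the rows of `T` indexed by `S`. -/
def rowSum {p m : ℕ} (T : Matrix (Fin p) (Fin m) (ZMod 2)) (S : Finset (Fin p)) :
    Fin m → ZMod 2 :=
  fun j => ∑ i ∈ S, T i j

theorem mem_span_rows_iff {p m : ℕ} (T : Matrix (Fin p) (Fin m) (ZMod 2)) (R : Finset (Fin p))
    (x : Fin m → ZMod 2) :
    x ∈ Submodule.span (ZMod 2) ((fun i => T i) '' (R : Set (Fin p))) ↔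
      ∃ S ⊆ R, rowSum T S = x := by
  constructor
  · intro hx
    obtain ⟨c, rfl⟩ := (Submodule.mem_span_image_finset_iff_exists_fun' (ZMod 2)).1 hx
    refine ⟨R.filter fun i => c i ≠ 0, Finset.filter_subset _ _, ?_⟩
    funext j
    rw [rowSum, Finset.sum_apply, Finset.sum_filter]
    refine Finset.sum_congr rfl fun i _ => ?_
    -- A nonzero coefficient in `ZMod 2` equals `1`.
    have h01 : ∀ a : ZMod 2, a = 0 ∨ a = 1 := by decide
    rcases h01 (c i) with h | h <;> simp [h]
  · rintro ⟨S, hS, rfl⟩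
    have hsum : rowSum T S = ∑ i ∈ S, (fun i => (T i : Fin m → ZMod 2)) i := by
      funext j
      exact (Finset.sum_apply j S fun i => (T i : Fin m → ZMod 2)).symm
    rw [hsum]
    exact Submodule.sum_mem _ fun i hi =>
      Submodule.subset_span ⟨i, Finset.mem_coe.2 (hS hi), rfl⟩

theorem minDist_le {p m d : ℕ} {T : Matrix (Fin p) (Fin m) (ZMod 2)} {R S : Finset (Fin p)}
    (hS : S ⊆ R) (hpos : 0 < hammingNorm (rowSum T S))
    (hd : hammingNorm (rowSum T S) ≤ d) : minDist T R ≤ d :=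
  le_trans (Nat.sInf_le ⟨rowSum T S, (mem_span_rows_iff T R _).2 ⟨S, hS, rfl⟩,
    hammingNorm_pos_iff.1 hpos, rfl⟩) hd

/-- The hypothesis `hR` guarantees that the infimum defining `minDist` is over a nonempty set. -/
theorem le_minDist {p m d : ℕ} {T : Matrix (Fin p) (Fin m) (ZMod 2)} {R : Finset (Fin p)}
    (hR : 0 < hammingNorm (rowSum T R))
    (h : ∀ S ∈ R.powerset, rowSum T S ≠ 0 → d ≤ hammingNorm (rowSum T S)) :
    d ≤ minDist T R := by
  refine le_csInf ⟨_, rowSum T R, (mem_span_rows_iff T R _).2 ⟨R, subset_rfl, rfl⟩,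
    hammingNorm_pos_iff.1 hR, rfl⟩ ?_
  rintro _ ⟨x, hx, hx0, rfl⟩
  obtain ⟨S, hS, rfl⟩ := (mem_span_rows_iff T R x).1 hx
  exact h S (Finset.mem_powerset.2 hS) hx0

/-- A form of `le_minDist` whose hypothesis is decided by enumerating only the subsets of `R`,
whereas instance search decides `∀ S ∈ R.powerset, _` by enumerating all of `Finset (Fin p)`. -/
theorem le_minDist_of_filter {p m d : ℕ} {T : Matrix (Fin p) (Fin m) (ZMod 2)}
    {R : Finset (Fin p)} (hR : 0 < hammingNorm (rowSum T R))
    (h : (R.powerset.filter fun S => rowSum T S ≠ 0 ∧ hammingNorm (rowSum T S) < d) = ∅) :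
    d ≤ minDist T R :=
  le_minDist hR fun _ hS hx0 => not_lt.1 fun hlt => Finset.filter_eq_empty_iff.1 h hS ⟨hx0, hlt⟩

/-- The coordinate sum of a vector is the parity of its weight, so sums of rows of even weight have
even weight, which is at least `2` when nonzero. -/
theorem two_le_minDist {p m : ℕ} {T : Matrix (Fin p) (Fin m) (ZMod 2)} {R : Finset (Fin p)}
    (hR : 0 < hammingNorm (rowSum T R)) (heven : ∀ i ∈ R, ∑ j, T i j = 0) :
    2 ≤ minDist T R := by
  refine le_minDist hR fun S hS hx0 => ?_
  have hsum : ∑ j, rowSum T S j = 0 := by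
    simp only [rowSum]
    rw [Finset.sum_comm]
    exact Finset.sum_eq_zero fun i hi => heven i (Finset.mem_powerset.1 hS hi)
  have hcast : ((hammingNorm (rowSum T S) : ℕ) : ZMod 2) = ∑ j, rowSum T S j := by
    rw [hammingNorm, Finset.card_filter, Nat.cast_sum]
    refine Finset.sum_congr rfl fun j _ => ?_
    have h01 : ∀ a : ZMod 2, ((if a ≠ 0 then 1 else 0 : ℕ) : ZMod 2) = a := by decide
    exact h01 _
  have hdvd : 2 ∣ hammingNorm (rowSum T S) :=
    (ZMod.natCast_eq_zero_iff _ _).1 (hcast.trans hsum)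
  exact Nat.le_of_dvd (hammingNorm_pos_iff.2 hx0) hdvd

theorem le_spec {p m d k : ℕ} {T : Matrix (Fin p) (Fin m) (ZMod 2)} (R : Finset (Fin p))
    (hk : R.card = k) (h : d ≤ minDist T R) : d ≤ spec T k :=
  h.trans (Finset.le_sup (Finset.mem_powersetCard.2 ⟨Finset.subset_univ R, hk⟩))

/-- If every `l`-set of rows contains a set from `L`, and the row sums over the members of `L` are
nonzero of weight at most `d`, then the spectrum is at most `d` from `l` on. The hypotheses are
phrased through `List.all` and `Finset.filter` so that deciding them enumerates only `L` and the
`l`-sets. -/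
theorem spec_le {p m d l : ℕ} {T : Matrix (Fin p) (Fin m) (ZMod 2)} (L : List (Finset (Fin p)))
    (hL : L.all fun S => 0 < hammingNorm (rowSum T S) ∧ hammingNorm (rowSum T S) ≤ d)
    (hcover : (((Finset.univ : Finset (Fin p)).powersetCard l).filter fun R =>
      L.all fun S => ¬ S ⊆ R) = ∅)
    {k : ℕ} (hlk : l ≤ k) : spec T k ≤ d := by
  refine Finset.sup_le fun R hR => ?_
  obtain ⟨R', hR'R, hR'⟩ :=
    Finset.exists_subset_card_eq (hlk.trans (Finset.mem_powersetCard.1 hR).2.ge)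
  have hex := Finset.filter_eq_empty_iff.1 hcover
    (Finset.mem_powersetCard.2 ⟨Finset.subset_univ R', hR'⟩)
  simp only [List.all_eq_true, decide_eq_true_eq, not_forall, not_not] at hex hL
  obtain ⟨S, hSL, hSR⟩ := hex
  exact minDist_le (hSR.trans hR'R) (hL S hSL).1 (hL S hSL).2

/-! ### Upper bounds for `T9` -/

theorem spec_T9_le_nine {k : ℕ} (hk : 1 ≤ k) : spec T9 k ≤ 9 :=
  spec_le [{0}, {1}, {2}, {3}, {4}, {5}, {6}, {7}, {8}] (by decide +kernel) (by decide +kernel) hk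

/-- The all-ones row `0` is the only row of weight more than `6`. -/
theorem spec_T9_le_six {k : ℕ} (hk : 2 ≤ k) : spec T9 k ≤ 6 :=
  spec_le [{1}, {2}, {3}, {4}, {5}, {6}, {7}, {8}] (by decide +kernel) (by decide +kernel) hk

/-- Rows `4, 5, 7, 8` have weight `4`, and any three of the rows `0, 1, 2, 3, 6` include a pair whose
sum has weight at most `4`. -/
theorem spec_T9_le_four {k : ℕ} (hk : 3 ≤ k) : spec T9 k ≤ 4 :=
  spec_le [{4}, {5}, {7}, {8}, {0, 1}, {2, 3}, {0, 6}, {1, 6}]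
    (by decide +kernel) (by decide +kernel) hk

theorem spec_T9_le_three {k : ℕ} (hk : 5 ≤ k) : spec T9 k ≤ 3 :=
  spec_le [{0, 1}, {2, 5}, {3, 4}, {6, 7}, {2, 8}, {3, 5}, {1, 4}, {0, 4, 8}]
    (by decide +kernel) (by decide +kernel) hk

theorem spec_T9_le_two {k : ℕ} (hk : 6 ≤ k) : spec T9 k ≤ 2 :=
  spec_le [{1, 4}, {2, 5}, {6, 7}, {2, 8}, {3, 5}] (by decide +kernel) (by decide +kernel) hk

/-- The sum of rows `0, 1, 3, 4` of `T9` is the Kronecker square of the sum of rows `0, 1` of `T3`,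
hence a unit vector. -/
theorem spec_T9_le_one {k : ℕ} (hk : 9 ≤ k) : spec T9 k ≤ 1 :=
  spec_le [{0, 1, 3, 4}] (by decide +kernel) (by decide +kernel) hk

/-! ### Lower bounds for `T9` -/

theorem nine_le_spec_T9 : 9 ≤ spec T9 1 :=
  le_spec {0} (by decide)
    (le_minDist_of_filter (by decide +kernel) (by decide +kernel))

theorem six_le_spec_T9 : 6 ≤ spec T9 2 :=
  le_spec {1, 2} (by decide)
    (le_minDist_of_filter (by decide +kernel) (by decide +kernel))

theorem four_le_spec_T9 : 4 ≤ spec T9 3 :=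
  le_spec {4, 5, 7} (by decide)
    (le_minDist_of_filter (by decide +kernel) (by decide +kernel))

theorem le_minDist_T9_4578 : 4 ≤ minDist T9 {4, 5, 7, 8} :=
  le_minDist_of_filter (by decide +kernel) (by decide +kernel)

theorem three_le_spec_T9 : 3 ≤ spec T9 5 :=
  le_spec {0, 4, 5, 7, 8} (by decide)
    (le_minDist_of_filter (by decide +kernel) (by decide +kernel))

theorem two_le_spec_T9_six : 2 ≤ spec T9 6 :=
  le_spec {1, 2, 3, 4, 5, 6} (by decide) (two_le_minDist (by decide +kernel) (by decide +kernel))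

theorem two_le_spec_T9_seven : 2 ≤ spec T9 7 :=
  le_spec {1, 2, 3, 4, 5, 6, 7} (by decide)
    (two_le_minDist (by decide +kernel) (by decide +kernel))

theorem two_le_spec_T9_eight : 2 ≤ spec T9 8 :=
  le_spec {1, 2, 3, 4, 5, 6, 7, 8} (by decide)
    (two_le_minDist (by decide +kernel) (by decide +kernel))

theorem one_le_spec_T9 : 1 ≤ spec T9 9 :=
  le_spec Finset.univ (by decide)
    (le_minDist (by decide +kernel) fun _ _ hx0 => hammingNorm_pos_iff.2 hx0)

/-- The minimum-distance spectrum of `T₉ = T₃ ⊗ T₃` is `(9,6,4,4,3,2,2,2,1)`;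
in particular `S_{T₉}(4) = 4` is attained by the row set `{4,5,7,8}`. -/
theorem stmt9 :
    (spec T9 1 = 9 ∧ spec T9 2 = 6 ∧ spec T9 3 = 4 ∧ spec T9 4 = 4 ∧ spec T9 5 = 3 ∧
     spec T9 6 = 2 ∧ spec T9 7 = 2 ∧ spec T9 8 = 2 ∧ spec T9 9 = 1) ∧
    minDist T9 ({4, 5, 7, 8} : Finset (Fin 9)) = 4 := by
  refine ⟨⟨(spec_T9_le_nine le_rfl).antisymm nine_le_spec_T9,
    (spec_T9_le_six le_rfl).antisymm six_le_spec_T9,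
    (spec_T9_le_four le_rfl).antisymm four_le_spec_T9,
    (spec_T9_le_four (by norm_num)).antisymm (le_spec _ (by decide) le_minDist_T9_4578),
    (spec_T9_le_three le_rfl).antisymm three_le_spec_T9,
    (spec_T9_le_two le_rfl).antisymm two_le_spec_T9_six,
    (spec_T9_le_two (by norm_num)).antisymm two_le_spec_T9_seven,
    (spec_T9_le_two (by norm_num)).antisymm two_le_spec_T9_eight,
    (spec_T9_le_one le_rfl).antisymm one_le_spec_T9⟩, le_antisymm ?_ le_minDist_T9_4578⟩
  exact minDist_le (S := {4}) (by decide) (by decide +kernel) (by decide +kernel)
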